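/- arXiv:2410.21550 — 2 statements merged into one kernel-verified Lean document; each statement's English description precedes it below -/
import Mathlib

section
/- Let n ≥ 2, τ ∈ (0,1), ε ∈ (0, 1/n), ε_z ∈ (0, 1/2), and let H, λ_i, λ̂_i, α̂, ẑ, Ĥ be as follows: H is an n×n real symmetric arrowhead matrix with arrow head α, shaft z, and diagonal D = diag(d_2, …, d_n), with ‖H‖ ≤ 1, d_{i+1} − d_i ≥ τ, |z_i| ≥ τ; λ_1 < … < λ_n are the eigenvalues of H; λ̂_i satisfy λ̂_1 < d_2 < λ̂_2 < … < d_n < λ̂_n and |λ̂_i − λ_i| ≤ ετ³/(2(n+1)); and Ĥ is the arrowhead matrix with arrow head α̂ = λ̂_1 + Σ_{j=2}^n (λ̂_j − d_j), diagonal D, and shaft ẑ having eigenvalues exactly λ̂_1, …, λ̂_n, with signs of ẑ matching those of z. If ẑ' is any vector with |ẑ'_i − ẑ_i| ≤ ε_z |ẑ_i| for all i, then the arrowhead matrix Ĥ' with arrow head α̂, shaft ẑ', and diagonal D satisfies ‖H − Ĥ'‖ ≤ ετ³/2 + ε_z + (1 + ε_z) · nε/(1 − nε). -/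
/-!
Write `n = m + 1` and `η = n ε / (1 - n ε)`.

An eigenvalue `t` of an arrowhead matrix lying off the diagonal `d` satisfies the secular equation
`t - a = ∑ j, z j ^ 2 / (t - d j)`. Clearing denominators gives a monic polynomial of degree `n`
vanishing at all the eigenvalues, and its value at `d k` yields
`∏ i, (d k - λ i) = - z k ^ 2 ∏_{l ≠ k} (d k - d l)` (`prod_sub_spectrum`). The same holds for the
matrix with shaft `zh` and eigenvalues `lamh`, so
`zh k ^ 2 / z k ^ 2 = ∏ i, (d k - lamh i) / (d k - lam i) = ∏ i, (1 + δ i)`.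

The secular equation also shows `|lam i - d k| ≥ τ ^ 3 / 4` (`dist_eigenvalue_diag`), whence
`|δ i| ≤ 2 ε / (m + 2) ≤ ε` and `|zh k ^ 2 / z k ^ 2 - 1| ≤ exp (n ε) - 1 ≤ η`. As the signs match,
`|z k - zh k| ≤ η |z k|`. Since `‖H‖ ≤ 1` gives `‖z‖ ≤ 1`, the shafts satisfy
`‖z - zh'‖ ≤ ‖z - zh‖ + ‖zh - zh'‖ ≤ η + εz (1 + η)`.

The heads are compared through traces: they differ by `∑ i, (lam i - lamh i)`, at most `ε τ ^ 3 / 2`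
in absolute value. The difference of the two matrices is an arrowhead matrix with zero diagonal, whose
norm is at most the size of its head plus the length of its shaft (`specNorm_arrowhead_zero_le`).
-/

open Matrix

/-- The `(m+1) × (m+1)` real symmetric arrowhead matrix `[[a, zᵀ],[z, diag d]]`
with arrow head `a`, shaft `z` and diagonal `d`. -/
def arrowhead {m : ℕ} (a : ℝ) (z d : Fin m → ℝ) :
    Matrix (Fin (m + 1)) (Fin (m + 1)) ℝ :=
  Matrix.of (Fin.cons (Fin.cons a z) fun k => Fin.cons (z k) fun l => if k = l then d k else 0)

/-- The spectral norm (largest singular value) of a matrix. -/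
noncomputable def specNorm {𝕜 : Type*} [RCLike 𝕜] {p q : Type*} [Fintype p] [Fintype q]
    [DecidableEq q] (A : Matrix p q 𝕜) : ℝ :=
  ‖LinearMap.toContinuousLinearMap (Matrix.toEuclideanLin A)‖

open Polynomial in
/-- A polynomial identity in disguise: `(X - a) ∏ (X - d j) - ∑ z j ^ 2 ∏_{l ≠ j} (X - d l)` is monic of
degree `m + 1` and vanishes at the `m + 1` distinct points `mu i`, hence equals `∏ (X - mu i)`. The
conclusion compares the two sides at `d k`, where all terms but one vanish. -/
lemma prod_sub_eq_of_secular {m : ℕ} {a : ℝ} {z d : Fin m → ℝ} {mu : Fin (m + 1) → ℝ}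
    (hmu : Function.Injective mu)
    (hsec : ∀ i, (mu i - a) * ∏ j, (mu i - d j)
      = ∑ j, z j ^ 2 * ∏ l ∈ Finset.univ.erase j, (mu i - d l)) (k : Fin m) :
    ∏ i, (d k - mu i) = -(z k ^ 2 * ∏ l ∈ Finset.univ.erase k, (d k - d l)) := by
  set P : ℝ[X] := (X - C a) * ∏ j, (X - C (d j)) with hP
  set Q : ℝ[X] := ∑ j, C (z j ^ 2) * ∏ l ∈ Finset.univ.erase j, (X - C (d l)) with hQ
  set R : ℝ[X] := ∏ i, (X - C (mu i)) with hR
  have hPm : P.Monic := (monic_X_sub_C a).mul (monic_prod_of_monic _ _ fun j _ => monic_X_sub_C _)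
  have hRm : R.Monic := monic_prod_of_monic _ _ fun j _ => monic_X_sub_C _
  have hPd : P.degree = (m + 1 : ℕ) := by
    rw [hP, degree_mul, degree_X_sub_C, degree_prod]
    simp [add_comm]
  have hRd : R.degree = (m + 1 : ℕ) := by
    rw [hR, degree_prod]
    simp
  have hQd : Q.degree < (m + 1 : ℕ) := by
    refine lt_of_le_of_lt (degree_sum_le _ _) ?_
    rw [Finset.sup_lt_iff (by exact_mod_cast WithBot.bot_lt_coe (m + 1))]
    intro j _
    rw [← smul_eq_C_mul]
    refine lt_of_le_of_lt (degree_smul_le _ _) ?_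
    rw [degree_prod]
    simp only [degree_X_sub_C, Finset.sum_const, Finset.card_erase_of_mem (Finset.mem_univ j),
      Finset.card_univ, Fintype.card_fin, nsmul_eq_mul, mul_one]
    exact_mod_cast (by omega : m - 1 < m + 1)
  have hPR : (P - R).degree < (m + 1 : ℕ) := by
    rw [← hPd]
    exact degree_sub_lt_left (hPd.trans hRd.symm) hPm.ne_zero
      (by rw [hPm.leadingCoeff, hRm.leadingCoeff])
  have key : P - R = Q := by
    refine eq_of_degrees_lt_of_eval_index_eq Finset.univ (v := mu) hmu.injOn ?_ ?_ ?_
    · simpa using hPR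
    · simpa using hQd
    · intro i _
      have h0 : R.eval (mu i) = 0 := by
        rw [hR, eval_prod]
        exact Finset.prod_eq_zero (Finset.mem_univ i) (by simp)
      have := hsec i
      rw [eval_sub, h0, sub_zero, hP, hQ]
      simpa [eval_prod, eval_finsetSum] using this
  have hk := congrArg (eval (d k)) key
  have hPk : P.eval (d k) = 0 := by
    rw [hP, eval_mul, eval_prod, Finset.prod_eq_zero (Finset.mem_univ k) (by simp), mul_zero]
  have hQk : Q.eval (d k) = z k ^ 2 * ∏ l ∈ Finset.univ.erase k, (d k - d l) := by
    rw [hQ, eval_finsetSum, Finset.sum_eq_single k]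
    · simp [eval_prod]
    · intro j _ hj
      rw [eval_mul, eval_prod,
        Finset.prod_eq_zero (Finset.mem_erase.2 ⟨hj.symm, Finset.mem_univ k⟩) (by simp), mul_zero]
    · simp
  rw [eval_sub, hPk, hQk, zero_sub] at hk
  have : R.eval (d k) = ∏ i, (d k - mu i) := by simp [hR, eval_prod]
  rw [← this]; linarith

lemma mulVec_arrowhead_zero {m : ℕ} (a : ℝ) (z d : Fin m → ℝ) (v : Fin (m + 1) → ℝ) :
    (arrowhead a z d *ᵥ v) 0 = a * v 0 + ∑ j, z j * v j.succ := by
  simp [arrowhead, Matrix.mulVec, dotProduct, Fin.sum_univ_succ]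

lemma mulVec_arrowhead_succ {m : ℕ} (a : ℝ) (z d : Fin m → ℝ) (v : Fin (m + 1) → ℝ) (k : Fin m) :
    (arrowhead a z d *ᵥ v) k.succ = z k * v 0 + d k * v k.succ := by
  simp [arrowhead, Matrix.mulVec, dotProduct, Fin.sum_univ_succ]

lemma exists_eigenvector {m : ℕ} {a : ℝ} {z d : Fin m → ℝ} {t : ℝ}
    (ht : t ∈ spectrum ℝ (arrowhead a z d)) :
    ∃ v : Fin (m + 1) → ℝ, v ≠ 0 ∧ arrowhead a z d *ᵥ v = t • v := by
  rw [← Matrix.spectrum_toLin', ← Module.End.hasEigenvalue_iff_mem_spectrum] at ht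
  obtain ⟨v, hv⟩ := ht.exists_hasEigenvector
  exact ⟨v, hv.2, by simpa using hv.apply_eq_smul⟩

/-- If `t = d k`, row `k` forces the head of an eigenvector to vanish, the other rows then kill every
entry but the `k`-th, and the first row kills that one too. -/
lemma ne_diag_of_mem_spectrum {m : ℕ} {a : ℝ} {z d : Fin m → ℝ} {t : ℝ}
    (hz : ∀ i, z i ≠ 0) (hd : Function.Injective d)
    (ht : t ∈ spectrum ℝ (arrowhead a z d)) (k : Fin m) : t ≠ d k := by
  rintro rfl
  obtain ⟨v, hv0, hv⟩ := exists_eigenvector ht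
  have h0 := congrFun hv 0
  have hs := fun j : Fin m => congrFun hv j.succ
  simp only [mulVec_arrowhead_zero, mulVec_arrowhead_succ, Pi.smul_apply, smul_eq_mul] at h0 hs
  have hv00 : v 0 = 0 := by
    have := hs k
    exact (mul_eq_zero.1 (by linarith : z k * v 0 = 0)).resolve_left (hz k)
  have hvj : ∀ j, j ≠ k → v j.succ = 0 := fun j hj => by
    have := hs j
    rw [hv00] at this
    exact (mul_eq_zero.1 (by linarith : (d j - d k) * v j.succ = 0)).resolve_left
      (sub_ne_zero.2 (hd.ne hj))
  rw [hv00, Finset.sum_eq_single k (fun j _ hj => by rw [hvj j hj, mul_zero]) (by simp)] at h0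
  have hvk : v k.succ = 0 := (mul_eq_zero.1 (by linarith : z k * v k.succ = 0)).resolve_left (hz k)
  refine hv0 (funext fun i => Fin.cases hv00 (fun j => ?_) i)
  by_cases hj : j = k
  · rw [hj]; exact hvk
  · exact hvj j hj

lemma secular_of_mem_spectrum {m : ℕ} {a : ℝ} {z d : Fin m → ℝ} {t : ℝ}
    (ht : t ∈ spectrum ℝ (arrowhead a z d)) (htd : ∀ k, t ≠ d k) :
    t - a = ∑ j, z j ^ 2 / (t - d j) := by
  obtain ⟨v, hv0, hv⟩ := exists_eigenvector ht
  have h0 := congrFun hv 0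
  have hs := fun j : Fin m => congrFun hv j.succ
  simp only [mulVec_arrowhead_zero, mulVec_arrowhead_succ, Pi.smul_apply, smul_eq_mul] at h0 hs
  have hvj : ∀ j, v j.succ = z j * v 0 / (t - d j) := fun j => by
    rw [eq_div_iff (sub_ne_zero.2 (htd j))]
    linarith [hs j]
  have hv00 : v 0 ≠ 0 := fun h => hv0 (funext fun i => Fin.cases h (fun j => by simp [hvj, h]) i)
  refine mul_right_cancel₀ hv00 ?_
  rw [Finset.sum_mul]
  have : ∑ j, z j * v j.succ = ∑ j, z j ^ 2 / (t - d j) * v 0 :=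
    Finset.sum_congr rfl fun j _ => by rw [hvj]; ring
  rw [← this]; linarith

lemma secular_prod {m : ℕ} {a : ℝ} {z d : Fin m → ℝ} {t : ℝ} (htd : ∀ k, t ≠ d k)
    (h : t - a = ∑ j, z j ^ 2 / (t - d j)) :
    (t - a) * ∏ j, (t - d j) = ∑ j, z j ^ 2 * ∏ l ∈ Finset.univ.erase j, (t - d l) := by
  rw [h, Finset.sum_mul]
  refine Finset.sum_congr rfl fun j _ => ?_
  rw [← Finset.mul_prod_erase _ _ (Finset.mem_univ j)]
  have := sub_ne_zero.2 (htd j)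
  field_simp

/-- The eigenvalues determine the shaft up to signs. -/
lemma prod_sub_spectrum {m : ℕ} {a : ℝ} {z d : Fin m → ℝ} {mu : Fin (m + 1) → ℝ}
    (hmu : Function.Injective mu) (hspec : spectrum ℝ (arrowhead a z d) = Set.range mu)
    (hne : ∀ i k, mu i ≠ d k) (k : Fin m) :
    ∏ i, (d k - mu i) = -(z k ^ 2 * ∏ l ∈ Finset.univ.erase k, (d k - d l)) :=
  prod_sub_eq_of_secular hmu (fun i => secular_prod (hne i)
    (secular_of_mem_spectrum (hspec ▸ Set.mem_range_self i) (hne i))) k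

/-- The trace as the sum of the eigenvalues: since `mu` lists `m + 1` distinct values, the spectrum is
simple and no multiplicities have to be tracked. -/
lemma trace_eq_sum_spectrum {m : ℕ} {a : ℝ} {z d : Fin m → ℝ} {mu : Fin (m + 1) → ℝ}
    (hmu : Function.Injective mu) (hspec : spectrum ℝ (arrowhead a z d) = Set.range mu) :
    a + ∑ j, d j = ∑ i, mu i := by
  have hH : (arrowhead a z d).IsHermitian := by
    ext i j
    refine Fin.cases ?_ (fun i => ?_) i <;> refine Fin.cases ?_ (fun j => ?_) j <;>
      simp [arrowhead]
    by_cases h : i = j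
    · simp [h]
    · simp [h, Ne.symm h]
  have hr : Set.range hH.eigenvalues = Set.range mu := by
    rw [← hH.spectrum_real_eq_range_eigenvalues, hspec]
  have hi : Finset.univ.image hH.eigenvalues = Finset.univ.image mu := by
    apply Finset.coe_injective
    simpa using hr
  have hinj : Function.Injective hH.eigenvalues := by
    rw [← Finset.card_image_iff.trans (by simp : Set.InjOn hH.eigenvalues
      (Finset.univ : Finset (Fin (m + 1))) ↔ Function.Injective hH.eigenvalues), hi,
      Finset.card_image_of_injective _ hmu]
  have ht := hH.trace_eq_sum_eigenvalues
  have h1 : ∑ i, hH.eigenvalues i = ∑ i, mu i := by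
    rw [← Finset.sum_image (f := fun x => x) hinj.injOn, hi, Finset.sum_image hmu.injOn]
  rw [← h1]
  simpa [Matrix.trace, Fin.sum_univ_succ, arrowhead] using ht

lemma sum_sq_mulVec_le {p : ℕ} (A : Matrix (Fin p) (Fin p) ℝ) (hA : specNorm A ≤ 1)
    (v : Fin p → ℝ) : ∑ i, (A *ᵥ v) i ^ 2 ≤ ∑ i, v i ^ 2 := by
  have h := (LinearMap.toContinuousLinearMap (Matrix.toEuclideanLin A)).le_of_opNorm_le hA
    (WithLp.toLp 2 v)
  rw [one_mul, EuclideanSpace.norm_eq, EuclideanSpace.norm_eq] at h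
  have h2 := (Real.sqrt_le_sqrt_iff (by positivity)).1 h
  simpa [Matrix.toLpLin_apply] using h2

lemma specNorm_arrowhead_zero_le {m : ℕ} (b : ℝ) (w : Fin m → ℝ) :
    specNorm (arrowhead b w 0) ≤ |b| + √(∑ j, w j ^ 2) := by
  refine ContinuousLinearMap.opNorm_le_bound _ (by positivity) fun x => ?_
  rw [EuclideanSpace.norm_eq, EuclideanSpace.norm_eq]
  refine Real.sqrt_le_iff.2 ⟨by positivity, ?_⟩
  rw [mul_pow, Real.sq_sqrt (by positivity)]
  simp only [LinearMap.coe_toContinuousLinearMap', Matrix.toLpLin_apply, Fin.sum_univ_succ,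
    mulVec_arrowhead_zero, mulVec_arrowhead_succ, Real.norm_eq_abs, sq_abs, Pi.zero_apply, zero_mul,
    add_zero, mul_pow, ← Finset.sum_mul]
  set W := √(∑ j, w j ^ 2) with hW
  set Y := √(∑ j : Fin m, x j.succ ^ 2) with hY
  have hW2 : ∑ j, w j ^ 2 = W ^ 2 := (Real.sq_sqrt (by positivity)).symm
  have hY2 : ∑ j : Fin m, x j.succ ^ 2 = Y ^ 2 := (Real.sq_sqrt (by positivity)).symm
  have hcs : |∑ j : Fin m, w j * x j.succ| ≤ W * Y := by
    refine abs_le_of_sq_le_sq ?_ (by positivity)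
    rw [mul_pow, ← hW2, ← hY2]
    exact Finset.sum_mul_sq_le_sq_mul_sq _ _ _
  rw [hW2, hY2]
  have hW0 : 0 ≤ W := Real.sqrt_nonneg _
  have hY0 : 0 ≤ Y := Real.sqrt_nonneg _
  have h1 : (b * x 0 + ∑ j : Fin m, w j * x j.succ) ^ 2 ≤ (|b| * |x 0| + W * Y) ^ 2 := by
    apply sq_le_sq'
    · linarith [neg_abs_le (∑ j : Fin m, w j * x j.succ), neg_abs_le (b * x 0), abs_mul b (x 0)]
    · linarith [le_abs_self (∑ j : Fin m, w j * x j.succ), le_abs_self (b * x 0), abs_mul b (x 0)]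
  rw [← sq_abs (x 0)]
  have h2 : 0 ≤ |b| * W * (|x 0| ^ 2 + Y ^ 2 - |x 0| * Y) :=
    mul_nonneg (by positivity) (by nlinarith [sq_nonneg (|x 0| - Y)])
  nlinarith [sq_nonneg (|b| * Y)]

lemma diag_gap {m : ℕ} {τ : ℝ} {d : Fin m → ℝ} (hτ : 0 < τ)
    (hgap : ∀ i j : Fin m, (j : ℕ) = (i : ℕ) + 1 → τ ≤ d j - d i) {i j : Fin m} (hij : i ≠ j) :
    τ ≤ |d i - d j| := by
  have main : ∀ (n : ℕ) (hn : n < m) (i : Fin m), (i : ℕ) < n → τ ≤ d ⟨n, hn⟩ - d i := by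
    intro n
    induction n with
    | zero => intro _ i hi; omega
    | succ n ih =>
      intro hn i hi
      have h1 := hgap ⟨n, by omega⟩ ⟨n + 1, hn⟩ rfl
      rcases Nat.lt_succ_iff_lt_or_eq.1 hi with h | h
      · linarith [ih (by omega) i h]
      · exact hgap i ⟨n + 1, hn⟩ (by simp [h])
  rcases lt_or_gt_of_ne hij with h | h
  · rw [abs_sub_comm]; exact (main j j.2 i h).trans (le_abs_self _)
  · exact (main i i.2 j h).trans (le_abs_self _)

/-- Eigenvalues stay away from the diagonal. If `t` is within `τ / 2` of `d k`, it is at least `τ / 2`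
from the other diagonal entries, so in the secular equation every term but `z k ^ 2 / (t - d k)` is
controlled, and that term is bounded by `2 + 2 / τ ≤ 4 / τ`. -/
lemma dist_eigenvalue_diag {m : ℕ} {τ a t : ℝ} {z d : Fin m → ℝ} (hτ : τ ∈ Set.Ioo (0 : ℝ) 1)
    (hgap : ∀ i j : Fin m, i ≠ j → τ ≤ |d i - d j|) (hz : ∀ i, τ ≤ |z i|)
    (ha : |a| ≤ 1) (ht : |t| ≤ 1) (hzs : ∑ j, z j ^ 2 ≤ 1) (htd : ∀ k, t ≠ d k)
    (h : t - a = ∑ j, z j ^ 2 / (t - d j)) (k : Fin m) : τ ^ 3 / 4 ≤ |t - d k| := by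
  obtain ⟨hτ0, hτ1⟩ := hτ
  have hτ3 : τ ^ 3 ≤ τ := by nlinarith [mul_pos hτ0 hτ0]
  by_cases hc : τ / 2 ≤ |t - d k|
  · linarith
  push Not at hc
  have hpos : 0 < |t - d k| := abs_pos.2 (sub_ne_zero.2 (htd k))
  rw [← Finset.add_sum_erase _ _ (Finset.mem_univ k)] at h
  have hrest : |∑ j ∈ Finset.univ.erase k, z j ^ 2 / (t - d j)| ≤ 2 / τ := by
    calc _ ≤ ∑ j ∈ Finset.univ.erase k, |z j ^ 2 / (t - d j)| := Finset.abs_sum_le_sum_abs _ _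
      _ ≤ ∑ j ∈ Finset.univ.erase k, z j ^ 2 * (2 / τ) := by
        refine Finset.sum_le_sum fun j hj => ?_
        have hg := hgap j k (Finset.ne_of_mem_erase hj)
        have h2 : τ / 2 ≤ |t - d j| := by
          have := abs_sub_le (d j) t (d k)
          rw [abs_sub_comm (d j) t] at this
          linarith
        rw [abs_div, abs_of_nonneg (sq_nonneg (z j)), div_eq_mul_inv]
        refine mul_le_mul_of_nonneg_left ?_ (sq_nonneg _)
        rw [← inv_div τ 2]
        exact inv_anti₀ (by positivity) h2
      _ ≤ ∑ j, z j ^ 2 * (2 / τ) :=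
        Finset.sum_le_sum_of_subset_of_nonneg (Finset.erase_subset _ _)
          fun _ _ _ => by positivity
      _ ≤ 2 / τ := by
        rw [← Finset.sum_mul]
        exact mul_le_of_le_one_left (by positivity) hzs
  have hk : τ ^ 2 / |t - d k| ≤ 4 / τ := by
    have e : |z k ^ 2 / (t - d k)| = |z k| ^ 2 / |t - d k| := by rw [abs_div, abs_pow]
    have h1 : τ ^ 2 / |t - d k| ≤ |z k ^ 2 / (t - d k)| := by
      rw [e]; gcongr; exact hz k
    have h2 : z k ^ 2 / (t - d k) = t - a - ∑ j ∈ Finset.univ.erase k, z j ^ 2 / (t - d j) := by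
      linarith
    have h3 : |z k ^ 2 / (t - d k)| ≤ 2 + 2 / τ := by
      rw [h2]
      refine (abs_sub _ _).trans (add_le_add ((abs_sub _ _).trans (by linarith)) hrest)
    have h4 : 2 ≤ 2 / τ := by rw [le_div_iff₀ hτ0]; linarith
    have h5 : 4 / τ = 2 / τ + 2 / τ := by ring
    linarith
  rw [div_le_div_iff₀ hpos hτ0] at hk
  linarith [show τ ^ 2 * τ = τ ^ 3 by ring]

lemma abs_prod_one_add_sub_one_le {p : ℕ} {ε : ℝ} {δ : Fin p → ℝ}
    (hδ : ∀ i, |δ i| ≤ ε) (hε : p * ε < 1) : |∏ i, (1 + δ i) - 1| ≤ p * ε / (1 - p * ε) := by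
  have h := Finset.norm_prod_one_add_sub_one_le Finset.univ δ
  have hs : ∑ i, ‖δ i‖ ≤ p * ε := by
    calc _ ≤ ∑ i : Fin p, ε := Finset.sum_le_sum fun i _ => hδ i
      _ = p * ε := by simp
  refine h.trans ?_
  have h1 : Real.exp (p * ε) ≤ 1 / (1 - p * ε) := by
    rw [le_div_iff₀ (by linarith)]
    have := Real.add_one_le_exp (-(p * ε))
    calc _ ≤ Real.exp (p * ε) * Real.exp (-(p * ε)) := by gcongr; linarith
      _ = 1 := by rw [← Real.exp_add]; simp
  have h2 : p * ε / (1 - p * ε) = 1 / (1 - p * ε) - 1 := by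
    have : 1 - p * ε ≠ 0 := by linarith
    field_simp
    ring
  rw [h2]
  linarith [Real.exp_le_exp.2 hs]

lemma sqrt_sum_sq_le {m : ℕ} {u v : Fin m → ℝ} {c : ℝ} (hc : 0 ≤ c) (h : ∀ i, |u i| ≤ c * |v i|) :
    √(∑ i, u i ^ 2) ≤ c * √(∑ i, v i ^ 2) := by
  rw [← Real.sqrt_sq hc, ← Real.sqrt_mul (by positivity), Finset.mul_sum]
  refine Real.sqrt_le_sqrt (Finset.sum_le_sum fun i _ => ?_)
  rw [← sq_abs (u i), ← sq_abs (v i), ← mul_pow]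
  have := h i
  gcongr

lemma sqrt_sum_sq_add_le {m : ℕ} (u v : Fin m → ℝ) :
    √(∑ i, (u i + v i) ^ 2) ≤ √(∑ i, u i ^ 2) + √(∑ i, v i ^ 2) := by
  have h := norm_add_le (WithLp.toLp 2 u : EuclideanSpace ℝ (Fin m)) (WithLp.toLp 2 v)
  simpa [EuclideanSpace.norm_eq] using h

theorem stmt_6 {m : ℕ} (hm : 1 ≤ m) (τ ε εz : ℝ)
    (hτ : τ ∈ Set.Ioo (0 : ℝ) 1) (hε : ε ∈ Set.Ioo (0 : ℝ) (1 / (m + 1)))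
    (hεz : εz ∈ Set.Ioo (0 : ℝ) (1 / 2))
    (a : ℝ) (z d : Fin m → ℝ)
    (hnorm : specNorm (arrowhead a z d) ≤ 1)
    (hgap : ∀ i j : Fin m, (j : ℕ) = (i : ℕ) + 1 → τ ≤ d j - d i)
    (hz : ∀ i, τ ≤ |z i|)
    (lam : Fin (m + 1) → ℝ) (hmono : StrictMono lam)
    (hspec : spectrum ℝ (arrowhead a z d) = Set.range lam)
    (lamh : Fin (m + 1) → ℝ)
    (hinter : ∀ k : Fin m, lamh (Fin.castSucc k) < d k ∧ d k < lamh (Fin.succ k))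
    (hclose : ∀ i, |lamh i - lam i| ≤ ε * τ ^ 3 / (2 * (m + 2)))
    (zh : Fin m → ℝ) (hsign : ∀ i, 0 ≤ z i * zh i)
    (hspec2 :
      spectrum ℝ (arrowhead (lamh 0 + ∑ j : Fin m, (lamh (Fin.succ j) - d j)) zh d)
        = Set.range lamh)
    (zh' : Fin m → ℝ) (hzh' : ∀ i, |zh' i - zh i| ≤ εz * |zh i|) :
    specNorm (arrowhead a z d -
        arrowhead (lamh 0 + ∑ j : Fin m, (lamh (Fin.succ j) - d j)) zh' d)
      ≤ ε * τ ^ 3 / 2 + εz + (1 + εz) * ((m + 1) * ε / (1 - (m + 1) * ε)) := by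
  obtain ⟨hτ0, hτ1⟩ := hτ
  obtain ⟨hε0, hε1⟩ := hε
  have hm0 : (0 : ℝ) < m + 1 := by positivity
  have hnε : (m + 1) * ε < 1 := by rw [lt_div_iff₀ hm0] at hε1; linarith
  set η : ℝ := (m + 1) * ε / (1 - (m + 1) * ε) with hη
  have hη0 : 0 ≤ η := div_nonneg (by positivity) (by linarith)
  have hgap' : ∀ i j : Fin m, i ≠ j → τ ≤ |d i - d j| := fun i j hij => diag_gap hτ0 hgap hij
  have hd : Function.Injective d := fun i j hij => by
    by_contra hne
    have := hgap' i j hne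
    rw [hij, sub_self, abs_zero] at this
    linarith
  have hz0 : ∀ i, z i ≠ 0 := fun i h => by
    have := hz i
    rw [h, abs_zero] at this
    linarith
  -- the first column of `H` has length at most `‖H‖`
  have hcol : a ^ 2 + ∑ j, z j ^ 2 ≤ 1 := by
    have := sum_sq_mulVec_le _ hnorm (Fin.cons 1 0)
    simpa [Fin.sum_univ_succ, mulVec_arrowhead_zero, mulVec_arrowhead_succ] using this
  have ha : |a| ≤ 1 := by
    rw [← sq_le_one_iff_abs_le_one]
    linarith [Finset.sum_nonneg fun j (_ : j ∈ Finset.univ) => sq_nonneg (z j)]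
  have hzs : ∑ j, z j ^ 2 ≤ 1 := by linarith [sq_nonneg a]
  have hmem : ∀ i, lam i ∈ spectrum ℝ (arrowhead a z d) := fun i => hspec ▸ Set.mem_range_self i
  have hlam : ∀ i, |lam i| ≤ 1 := fun i => by
    obtain ⟨v, hv0, hv⟩ := exists_eigenvector (hmem i)
    have h := sum_sq_mulVec_le _ hnorm v
    simp only [hv, Pi.smul_apply, smul_eq_mul, mul_pow, ← Finset.mul_sum] at h
    have hpos : 0 < ∑ i, v i ^ 2 := by
      obtain ⟨j, hj⟩ := Function.ne_iff.1 hv0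
      exact Finset.sum_pos' (fun _ _ => sq_nonneg _) ⟨j, Finset.mem_univ j, by
        have : v j ≠ 0 := hj
        positivity⟩
    rw [← sq_le_one_iff_abs_le_one]
    by_contra! hlt
    nlinarith
  have hne : ∀ i k, lam i ≠ d k := fun i k => ne_diag_of_mem_spectrum hz0 hd (hmem i) k
  have hmonoh : StrictMono lamh :=
    Fin.strictMono_iff_lt_succ.2 fun k => (hinter k).1.trans (hinter k).2
  have hneh : ∀ i k, lamh i ≠ d k := fun i k => by
    rcases le_or_gt i (Fin.castSucc k) with h | h
    · exact ((hmonoh.monotone h).trans_lt (hinter k).1).ne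
    · exact ((hinter k).2.trans_le (hmonoh.monotone (Fin.castSucc_lt_iff_succ_le.1 h))).ne'
  have hshaft : ∀ k, |z k - zh k| ≤ η * |z k| := fun k => by
    have hdist : ∀ i, τ ^ 3 / 4 ≤ |lam i - d k| := fun i =>
      dist_eigenvalue_diag ⟨hτ0, hτ1⟩ hgap' hz ha (hlam i) hzs (hne i)
        (secular_of_mem_spectrum (hmem i) (hne i)) k
    have h1 := prod_sub_spectrum hmono.injective hspec hne k
    have h2 := prod_sub_spectrum hmonoh.injective hspec2 hneh k
    set δ : Fin (m + 1) → ℝ := fun i => (lam i - lamh i) / (d k - lam i) with hδ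
    have hδle : ∀ i, |δ i| ≤ ε := fun i => by
      have hp : 0 < |d k - lam i| := abs_pos.2 (sub_ne_zero.2 (hne i k).symm)
      -- the constant: `ε τ³ / (2 (m + 2)) ≤ ε τ³ / 4 ≤ ε |lam i - d k|`, as `m ≥ 0`
      rw [hδ, abs_div, div_le_iff₀ hp, abs_sub_comm (lam i), abs_sub_comm (d k)]
      refine (hclose i).trans ((div_le_iff₀ (by positivity)).2 ?_)
      have h3 : ε * (τ ^ 3 / 4) ≤ ε * |lam i - d k| := by gcongr; exact hdist i
      nlinarith [mul_nonneg (by positivity : (0 : ℝ) ≤ m) (by positivity : 0 ≤ ε * |lam i - d k|)]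
    have hprod : ∏ i, (d k - lamh i) = (∏ i, (d k - lam i)) * ∏ i, (1 + δ i) := by
      rw [← Finset.prod_mul_distrib]
      refine Finset.prod_congr rfl fun i _ => ?_
      have := sub_ne_zero.2 (hne i k).symm
      simp only [hδ]
      field_simp
      ring
    have hE : ∏ l ∈ Finset.univ.erase k, (d k - d l) ≠ 0 :=
      Finset.prod_ne_zero_iff.2 fun l hl => sub_ne_zero.2 (hd.ne (Finset.ne_of_mem_erase hl).symm)
    have hsq : zh k ^ 2 = z k ^ 2 * ∏ i, (1 + δ i) := by
      refine mul_right_cancel₀ hE ?_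
      rw [h1, h2] at hprod
      linarith
    have hP := abs_prod_one_add_sub_one_le hδle (by push_cast; exact hnε)
    push_cast at hP
    rw [← hη] at hP
    have hzk : 0 < |z k| := abs_pos.2 (hz0 k)
    -- matching signs give `|z k| ≤ |z k + zh k|`
    have hplus : |z k| ≤ |z k + zh k| := by
      rw [← sq_le_sq]
      nlinarith [hsign k, sq_nonneg (zh k)]
    refine le_of_mul_le_mul_right ?_ hzk
    calc |z k - zh k| * |z k| ≤ |z k - zh k| * |z k + zh k| := by gcongr
      _ = |z k| ^ 2 * |∏ i, (1 + δ i) - 1| := by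
        rw [← abs_mul, ← abs_pow, ← abs_mul, ← abs_neg]
        congr 1
        linear_combination hsq
      _ ≤ |z k| ^ 2 * η := by gcongr
      _ = η * |z k| * |z k| := by ring
  have hhead : |a - (lamh 0 + ∑ j : Fin m, (lamh (Fin.succ j) - d j))| ≤ ε * τ ^ 3 / 2 := by
    have ht := trace_eq_sum_spectrum hmono.injective hspec
    have e : a - (lamh 0 + ∑ j : Fin m, (lamh (Fin.succ j) - d j)) = -∑ i, (lamh i - lam i) := by
      rw [Finset.sum_sub_distrib, Finset.sum_sub_distrib, Fin.sum_univ_succ lamh, ← ht]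
      ring
    rw [e, abs_neg]
    calc _ ≤ ∑ i, |lamh i - lam i| := Finset.abs_sum_le_sum_abs _ _
      _ ≤ ∑ i : Fin (m + 1), ε * τ ^ 3 / (2 * (m + 2)) := Finset.sum_le_sum fun i _ => hclose i
      _ = (m + 1) * (ε * τ ^ 3 / (2 * (m + 2))) := by simp
      _ ≤ ε * τ ^ 3 / 2 := by
        rw [← mul_div_assoc, div_le_div_iff₀ (by positivity) (by norm_num)]
        have : 0 < ε * τ ^ 3 := by positivity
        nlinarith
  set ah := lamh 0 + ∑ j : Fin m, (lamh (Fin.succ j) - d j)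
  have hdiff : arrowhead a z d - arrowhead ah zh' d = arrowhead (a - ah) (z - zh') 0 := by
    ext i j
    refine Fin.cases ?_ (fun i => ?_) i <;> refine Fin.cases ?_ (fun j => ?_) j <;>
      simp [arrowhead]
  have hz1 : √(∑ j, z j ^ 2) ≤ 1 := Real.sqrt_le_one.2 hzs
  have n1 : √(∑ j, (z j - zh j) ^ 2) ≤ η :=
    (sqrt_sum_sq_le hη0 hshaft).trans (mul_le_of_le_one_right hη0 hz1)
  have n2 : √(∑ j, zh j ^ 2) ≤ 1 + η := by
    have h := sqrt_sum_sq_add_le z (fun j => zh j - z j)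
    simp only [add_sub_cancel] at h
    simp only [sub_sq_comm (zh _) (z _)] at h
    linarith
  have n3 : √(∑ j, (zh j - zh' j) ^ 2) ≤ εz * (1 + η) :=
    (sqrt_sum_sq_le hεz.1.le fun j => by rw [abs_sub_comm]; exact hzh' j).trans
      (mul_le_mul_of_nonneg_left n2 hεz.1.le)
  have n4 : √(∑ j, (z - zh') j ^ 2) ≤ η + εz * (1 + η) := by
    have h := sqrt_sum_sq_add_le (fun j => z j - zh j) (fun j => zh j - zh' j)
    simp only [sub_add_sub_cancel] at h
    exact h.trans (add_le_add n1 n3)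
  rw [hdiff]
  refine (specNorm_arrowhead_zero_le _ _).trans ?_
  linarith
end

section
/- Let n ≥ 3 and ε, ε_1 ∈ (0, 1/2). Let H̃, W, Q, Λ̃, Ũ ∈ ℝ^{n×n} be such that ‖W‖ ≤ √(1 + ε_1/n), Q is orthogonal, Λ̃ is diagonal with ‖Λ̃‖ ≤ 4, ‖H̃ − Q Λ̃ Qᵀ‖ ≤ ε, and ‖W Q − Ũ‖ ≤ ε/n. Then ‖W H̃ Wᵀ − Ũ Λ̃ Ũᵀ‖ ≤ 7 ε. -/
/-!
Put `A = W Q`, `D = A - U` and `Λ = diagonal lam`. Then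
`W H Wᵀ - U Λ Uᵀ = W (H - Q Λ Qᵀ) Wᵀ + A Λ Dᵀ + D Λ Aᵀ - D Λ Dᵀ`.
The spectral norm is submultiplicative and transpose-invariant, and `‖A‖ ≤ ‖W‖` since `‖Q‖ ≤ 1`.
From `n ≥ 3` and `ε, ε1 < 1 / 2` one gets `‖W‖ ≤ √(7 / 6) ≤ 13 / 12` and `‖D‖ ≤ ε / 3`, so with
`‖Λ‖ ≤ 4` the sum is at most
`(13 / 12) ^ 2 * ε + 8 * (13 / 12) * (ε / 3) + 4 * (ε / 3) ^ 2 ≤ 7 * ε`.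
-/

open Matrix

open scoped Matrix.Norms.L2Operator in
/-- For real square matrices `specNorm` is definitionally Mathlib's `L²` operator norm, whose
`C⋆`-algebra structure supplies submultiplicativity and `‖Qᵀ * Q‖ = ‖Q‖ * ‖Q‖`. -/
theorem specNorm_eq_norm {n : ℕ} (A : Matrix (Fin n) (Fin n) ℝ) : specNorm A = ‖A‖ := rfl

open scoped Matrix.Norms.L2Operator in
theorem norm_transpose_real {n : ℕ} (A : Matrix (Fin n) (Fin n) ℝ) : ‖Aᵀ‖ = ‖A‖ := by
  rw [← Matrix.conjTranspose_eq_transpose_of_trivial, Matrix.l2_opNorm_conjTranspose]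

open scoped Matrix.Norms.L2Operator in
theorem norm_le_one_of_transpose_mul_self {n : ℕ} (Q : Matrix (Fin n) (Fin n) ℝ)
    (hQ : Qᵀ * Q = 1) : ‖Q‖ ≤ 1 := by
  have h := Matrix.l2_opNorm_conjTranspose_mul_self Q
  rw [Matrix.conjTranspose_eq_transpose_of_trivial, hQ] at h
  -- `‖1‖ = ‖1ᵀ * 1‖ = ‖1‖²` bounds `‖1‖` by one even when the index type is empty.
  have h1 := Matrix.l2_opNorm_conjTranspose_mul_self (1 : Matrix (Fin n) (Fin n) ℝ)
  rw [Matrix.conjTranspose_one, one_mul] at h1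
  have h2 : ‖(1 : Matrix (Fin n) (Fin n) ℝ)‖ ≤ 1 := by
    nlinarith [norm_nonneg (1 : Matrix (Fin n) (Fin n) ℝ)]
  nlinarith [norm_nonneg Q]

open scoped Matrix.Norms.L2Operator in
theorem norm_mul_mul_transpose_le {n : ℕ} {A B C : Matrix (Fin n) (Fin n) ℝ} {a b c : ℝ}
    (hA : ‖A‖ ≤ a) (hB : ‖B‖ ≤ b) (hC : ‖C‖ ≤ c) : ‖A * B * Cᵀ‖ ≤ a * b * c := by
  have ha := (norm_nonneg A).trans hA
  have hb := (norm_nonneg B).trans hB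
  calc ‖A * B * Cᵀ‖ ≤ ‖A‖ * ‖B‖ * ‖Cᵀ‖ :=
        (norm_mul_le _ _).trans (by gcongr; exact norm_mul_le _ _)
    _ ≤ a * b * c := by rw [norm_transpose_real]; gcongr

theorem stmt_14 {n : ℕ} (hn : 3 ≤ n) (ε ε1 : ℝ)
    (hε : ε ∈ Set.Ioo (0 : ℝ) (1 / 2)) (hε1 : ε1 ∈ Set.Ioo (0 : ℝ) (1 / 2))
    (H W Q U : Matrix (Fin n) (Fin n) ℝ) (lam : Fin n → ℝ)
    (hW : specNorm W ≤ Real.sqrt (1 + ε1 / n))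
    (hQ : Qᵀ * Q = 1)
    (hlam : specNorm (Matrix.diagonal lam) ≤ 4)
    (hH : specNorm (H - Q * Matrix.diagonal lam * Qᵀ) ≤ ε)
    (hU : specNorm (W * Q - U) ≤ ε / n) :
    specNorm (W * H * Wᵀ - U * Matrix.diagonal lam * Uᵀ) ≤ 7 * ε := by
  open scoped Matrix.Norms.L2Operator in
  simp only [specNorm_eq_norm] at *
  obtain ⟨hε0, hεh⟩ := hε
  obtain ⟨hε10, hε1h⟩ := hε1
  have hn' : (3 : ℝ) ≤ n := by exact_mod_cast hn
  have hQn := norm_le_one_of_transpose_mul_self Q hQ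
  have hD : ‖W * Q - U‖ ≤ ε / 3 := hU.trans (by gcongr)
  have hfrac : ε1 / n ≤ 1 / 6 := by
    rw [div_le_iff₀ (by linarith)]; linarith
  -- `(13 / 12)² = 169 / 144 ≥ 7 / 6`
  have hW' : ‖W‖ ≤ 13 / 12 := hW.trans (by
    rw [Real.sqrt_le_left (by norm_num)]; linarith)
  have hA : ‖W * Q‖ ≤ 13 / 12 :=
    (norm_mul_le _ _).trans (by nlinarith [norm_nonneg W, norm_nonneg Q])
  have key : W * H * Wᵀ - U * diagonal lam * Uᵀ =
      W * (H - Q * diagonal lam * Qᵀ) * Wᵀ + W * Q * diagonal lam * (W * Q - U)ᵀ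
        + (W * Q - U) * diagonal lam * (W * Q)ᵀ
        - (W * Q - U) * diagonal lam * (W * Q - U)ᵀ := by
    simp only [transpose_sub, transpose_mul]
    noncomm_ring
  rw [key]
  -- The only nonlinear term left, `4 * (ε / 3) ^ 2`, is controlled by `ε < 1 / 2`.
  have h1 := norm_mul_mul_transpose_le hW' hH hW'
  have h2 := norm_mul_mul_transpose_le hA hlam hD
  have h3 := norm_mul_mul_transpose_le hD hlam hA
  have h4 := norm_mul_mul_transpose_le hD hlam hD
  refine (norm_sub_le _ _).trans ?_
  refine (add_le_add (norm_add₃_le.trans (add_le_add (add_le_add h1 h2) h3)) h4).trans ?_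
  nlinarith
end
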